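/- For every n ≥ 1, the quantity S_n satisfies 0 < S_n < 1; equivalently, 0 < 1 − S_n < 1. -/

import Mathlib

open Finset

/-- The row of an `n × n` Bingo board through index `i`. -/
def bingoRow (n : ℕ) (i : Fin n) : Finset (Fin n × Fin n) :=
  Finset.univ.filter (fun s => s.1 = i)

/-- The column of an `n × n` Bingo board through index `j`. -/
def bingoCol (n : ℕ) (j : Fin n) : Finset (Fin n × Fin n) :=
  Finset.univ.filter (fun s => s.2 = j)

/-- The main diagonal `{(i,i)}`. -/
def bingoDiag (n : ℕ) : Finset (Fin n × Fin n) :=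
  Finset.univ.filter (fun s => (s.2 : ℕ) = (s.1 : ℕ))

/-- The anti-diagonal `{(i, n-1-i)}`. -/
def bingoAntiDiag (n : ℕ) : Finset (Fin n × Fin n) :=
  Finset.univ.filter (fun s => (s.2 : ℕ) = n - 1 - (s.1 : ℕ))

/-- The set `𝓛` of winning lines: `n` rows, `n` columns and the two diagonals. -/
def bingoLines (n : ℕ) : Finset (Finset (Fin n × Fin n)) :=
  (Finset.univ.image (bingoRow n)) ∪ (Finset.univ.image (bingoCol n)) ∪
    {bingoDiag n, bingoAntiDiag n}

/-- An `(n,m)`-Bingo card: an injective assignment of numbers such that column `j`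
only uses numbers in `[m*j, m*(j+1))`. -/
def IsBingoCard (n m : ℕ) (c : Fin n × Fin n → Fin (m * n)) : Prop :=
  Function.Injective c ∧
    ∀ i j : Fin n, m * (j : ℕ) ≤ (c (i, j) : ℕ) ∧ (c (i, j) : ℕ) < m * ((j : ℕ) + 1)

/-- Bingo is achieved within the first `k` calls of `σ`: some winning line has all of its
numbers among `σ 0, …, σ (k-1)`. -/
def BingoWins (n m : ℕ) (c : Fin n × Fin n → Fin (m * n))
    (σ : Equiv.Perm (Fin (m * n))) (k : ℕ) : Prop :=
  ∃ L ∈ bingoLines n, ∀ s ∈ L, ∃ t : Fin (m * n), (t : ℕ) < k ∧ σ t = c s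

/-- `S_n = ∑_{∅ ≠ X ⊆ 𝓛} (-1)^{|X|+1} / (m(X)+1)`, where `m(X)` is the number of squares
covered by the union of the lines in `X`. -/
noncomputable def Sn (n : ℕ) : ℝ :=
  ∑ X ∈ (bingoLines n).powerset.filter (fun X => X.Nonempty),
    (-1 : ℝ) ^ (X.card + 1) / (((X.sup id).card : ℝ) + 1)

/-!
Colour each square independently with probability `p`. By inclusion-exclusion, the probability
`P(p)` that some line is fully coloured is `∑_{∅ ≠ X ⊆ 𝓛} (-1)^{|X|+1} p^{m(X)}`, so
`S_n = ∫₀¹ P(p) dp`. For `0 < p < 1` every colouring has positive probability. Colouring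
everything completes a line and colouring nothing does not, hence `0 < P(p) < 1`.
-/

section InclusionExclusion

variable {ι α R : Type*} [DecidableEq α]

theorem inf'_Icc_eq_Icc_sup [SemilatticeSup α] [OrderBot α] [LocallyFiniteOrder α]
    {X : Finset ι} (hX : X.Nonempty) (A : ι → α) (v : α) :
    X.inf' hX (fun i => Icc (A i) v) = Icc (X.sup A) v := by
  ext t
  rw [Finset.mem_inf' hX]
  simp only [mem_Icc, Finset.sup_le_iff]
  obtain ⟨i, hi⟩ := hX
  exact ⟨fun h => ⟨fun j hj => (h j hj).1, (h i hi).2⟩, fun h j hj => ⟨h.1 j hj, h.2⟩⟩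

theorem sum_Icc_pow_card_mul_pow_card_sdiff [CommSemiring R] (a b : R) {U V : Finset α}
    (hUV : U ⊆ V) :
    ∑ T ∈ Icc U V, a ^ #T * b ^ #(V \ T) = a ^ #U * (a + b) ^ #(V \ U) := by
  have disjoint_of_mem {W : Finset α} (hW : W ∈ (V \ U).powerset) : Disjoint U W :=
    disjoint_of_subset_right (mem_powerset.1 hW) disjoint_sdiff
  have union_injOn : Set.InjOn (U ∪ ·) ((V \ U).powerset : Set (Finset α)) := by
    intro W hW W' hW' h
    rw [← union_sdiff_cancel_left (disjoint_of_mem hW),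
      ← union_sdiff_cancel_left (disjoint_of_mem hW')]
    exact congrArg (· \ U) h
  rw [Icc_eq_image_powerset hUV, sum_image union_injOn, ← sum_pow_mul_eq_add_pow, mul_sum]
  refine sum_congr rfl fun W hW => ?_
  rw [card_union_of_disjoint (disjoint_of_mem hW), ← sup_eq_union, ← sdiff_sdiff_left,
    card_sdiff_of_subset (mem_powerset.1 hW), pow_add, mul_assoc]

/-- The probability that a random subset of `V`, containing each point independently with
probability `p`, contains one of the sets `A i`, `i ∈ s`. It is written as the sum of the
probabilities of the subsets `T` with `A i ⊆ T ⊆ V` for some `i ∈ s`; an `A i` that is not a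
subset of `V` contributes nothing. -/
def coverProb [CommRing R] (s : Finset ι) (A : ι → Finset α) (V : Finset α) (p : R) : R :=
  ∑ T ∈ s.biUnion (fun i => Icc (A i) V), p ^ #T * (1 - p) ^ #(V \ T)

theorem coverProb_eq_sum_powerset [CommRing R] {s : Finset ι} {A : ι → Finset α} {V : Finset α}
    (hA : ∀ i ∈ s, A i ⊆ V) (p : R) :
    coverProb s A V p = ∑ X ∈ s.powerset with X.Nonempty, (-1) ^ (#X + 1) * p ^ #(X.sup A) := by
  rw [coverProb, inclusion_exclusion_sum_biUnion, ← sum_coe_sort {X ∈ s.powerset | X.Nonempty}]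
  refine sum_congr rfl fun X _ => ?_
  obtain ⟨hXs, hX⟩ := mem_filter.1 X.2
  have sup_subset : X.1.sup A ⊆ V := Finset.sup_le fun i hi => hA i (mem_powerset.1 hXs hi)
  rw [inf'_Icc_eq_Icc_sup hX, sum_Icc_pow_card_mul_pow_card_sdiff _ _ sup_subset,
    add_sub_cancel, one_pow, mul_one, zsmul_eq_mul]
  push_cast
  rfl

end InclusionExclusion

section Bounds

variable {ι α R : Type*} [DecidableEq α] [CommRing R] [PartialOrder R] [IsStrictOrderedRing R]
  {s : Finset ι} {A : ι → Finset α} {V : Finset α} {p : R}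

theorem coverProb_pos {i : ι} (hi : i ∈ s) (hiV : A i ⊆ V) (hp : p ∈ Set.Ioo 0 1) :
    0 < coverProb s A V p :=
  sum_pos (fun _ _ => mul_pos (pow_pos hp.1 _) (pow_pos (sub_pos.2 hp.2) _))
    ⟨V, mem_biUnion.2 ⟨i, hi, right_mem_Icc.2 hiV⟩⟩

theorem coverProb_lt_one (hA : ∀ i ∈ s, (A i).Nonempty) (hp : p ∈ Set.Ioo 0 1) :
    coverProb s A V p < 1 := by
  have weight_pos (T : Finset α) : 0 < p ^ #T * (1 - p) ^ #(V \ T) :=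
    mul_pos (pow_pos hp.1 _) (pow_pos (sub_pos.2 hp.2) _)
  have empty_notMem : ∅ ∉ s.biUnion (fun i => Icc (A i) V) := by
    simp only [mem_biUnion, mem_Icc, not_exists, not_and]
    exact fun i hi hle => absurd (subset_empty.1 hle) (hA i hi).ne_empty
  calc coverProb s A V p
      < ∑ T ∈ Icc ∅ V, p ^ #T * (1 - p) ^ #(V \ T) :=
        sum_lt_sum_of_subset (biUnion_subset.2 fun i _ => Icc_subset_Icc_left (empty_subset _))
          (left_mem_Icc.2 (empty_subset V)) empty_notMem (weight_pos ∅)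
          fun T _ _ => (weight_pos T).le
    _ = 1 := by simp [sum_Icc_pow_card_mul_pow_card_sdiff p (1 - p) (empty_subset V)]

end Bounds

section Integral

variable {ι α : Type*} [DecidableEq α]

theorem continuous_coverProb (s : Finset ι) (A : ι → Finset α) (V : Finset α) :
    Continuous (coverProb s A V : ℝ → ℝ) := by
  unfold coverProb
  fun_prop

theorem integral_coverProb {s : Finset ι} {A : ι → Finset α} {V : Finset α}
    (hA : ∀ i ∈ s, A i ⊆ V) :
    ∫ p in (0 : ℝ)..1, coverProb s A V p =
      ∑ X ∈ s.powerset with X.Nonempty, (-1 : ℝ) ^ (#X + 1) / ((#(X.sup A) : ℝ) + 1) := by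
  simp_rw [coverProb_eq_sum_powerset hA]
  rw [intervalIntegral.integral_finsetSum
    fun X _ => Continuous.intervalIntegrable (by fun_prop) 0 1]
  simp [div_eq_mul_inv]

theorem Sn_bounds_general {s : Finset ι} {A : ι → Finset α} (hs : s.Nonempty)
    (hA : ∀ i ∈ s, (A i).Nonempty) :
    ∑ X ∈ s.powerset with X.Nonempty, (-1 : ℝ) ^ (#X + 1) / ((#(X.sup A) : ℝ) + 1) ∈
      Set.Ioo 0 1 := by
  obtain ⟨i, hi⟩ := hs
  have subset_sup : ∀ j ∈ s, A j ⊆ s.sup A := fun j hj => le_sup hj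
  have hcont := continuous_coverProb s A (s.sup A)
  rw [← integral_coverProb subset_sup]
  constructor
  · exact intervalIntegral.intervalIntegral_pos_of_pos_on (hcont.intervalIntegrable 0 1)
      (fun p hp => coverProb_pos hi (subset_sup i hi) hp) one_pos
  · rw [← sub_pos]
    calc (0 : ℝ) < ∫ p in (0 : ℝ)..1, (1 - coverProb s A (s.sup A) p) :=
          intervalIntegral.intervalIntegral_pos_of_pos_on
            ((continuous_const.sub hcont).intervalIntegrable 0 1)
            (fun p hp => sub_pos.2 (coverProb_lt_one hA hp)) one_pos
      _ = 1 - ∫ p in (0 : ℝ)..1, coverProb s A (s.sup A) p := by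
          rw [intervalIntegral.integral_sub intervalIntegrable_const
            (hcont.intervalIntegrable 0 1)]
          simp

end Integral

theorem nonempty_of_mem_bingoLines {n : ℕ} (hn : 1 ≤ n) {L : Finset (Fin n × Fin n)}
    (hL : L ∈ bingoLines n) : L.Nonempty := by
  simp only [bingoLines, mem_union, mem_image, mem_univ, true_and, mem_insert,
    mem_singleton] at hL
  rcases hL with (⟨i, rfl⟩ | ⟨j, rfl⟩) | rfl | rfl
  · exact ⟨(i, i), by simp [bingoRow]⟩
  · exact ⟨(j, j), by simp [bingoCol]⟩
  · exact ⟨(⟨0, hn⟩, ⟨0, hn⟩), by simp [bingoDiag]⟩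
  · exact ⟨(⟨0, hn⟩, ⟨n - 1, by lia⟩), by simp [bingoAntiDiag]⟩

theorem bingoLines_nonempty (n : ℕ) : (bingoLines n).Nonempty :=
  ⟨bingoDiag n, by simp [bingoLines]⟩

/-- `0 < S_n < 1`, equivalently `0 < 1 - S_n < 1`. -/
theorem Sn_bounds (n : ℕ) (hn : 1 ≤ n) :
    (0 < Sn n ∧ Sn n < 1) ∧ (0 < 1 - Sn n ∧ 1 - Sn n < 1) := by
  have h : Sn n ∈ Set.Ioo 0 1 :=
    Sn_bounds_general (bingoLines_nonempty n) fun _ hL => nonempty_of_mem_bingoLines hn hL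
  exact ⟨h, sub_pos.2 h.2, sub_lt_self 1 h.1⟩
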